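/- arXiv:2603.18674 — 2 statements merged into one kernel-verified Lean document; each statement's English description precedes it below -/
import Mathlib

section
/- For every n ≥ 3, the cycle C_n admits a good 2-tone 6-coloring. -/
/-- A `t`-tone `k`-coloring of a simple graph `G`: each vertex gets a set of `t`
distinct colors from `{1,…,k}`, and any two distinct vertices in the same
connected component share fewer colors than their distance. -/
def IsTToneColoring {V : Type*} (G : SimpleGraph V) (t k : ℕ) (f : V → Finset ℕ) : Prop :=
  (∀ v, f v ⊆ Finset.Icc 1 k ∧ (f v).card = t) ∧
  ∀ u v : V, u ≠ v → G.Reachable u v → ((f u) ∩ (f v)).card < G.dist u v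

/-- The `t`-tone chromatic number: the least `k` admitting a `t`-tone `k`-coloring. -/
noncomputable def toneNumber {V : Type*} (G : SimpleGraph V) (t : ℕ) : ℕ :=
  sInf {k | ∃ f : V → Finset ℕ, IsTToneColoring G t k f}

/-- A good 2-tone `k`-coloring: a 2-tone `k`-coloring in which any two vertices
at distance exactly two share exactly one common color. -/
def IsGood2ToneColoring {V : Type*} (G : SimpleGraph V) (k : ℕ) (f : V → Finset ℕ) : Prop :=
  IsTToneColoring G 2 k f ∧ ∀ u v : V, G.dist u v = 2 → ((f u) ∩ (f v)).card = 1

set_option maxRecDepth 100000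

theorem good_of_local {V : Type*} (G : SimpleGraph V) (f : V → Finset ℕ)
    (h0 : ∀ v, f v ⊆ Finset.Icc 1 6 ∧ (f v).card = 2)
    (h1 : ∀ u v, G.Adj u v → (f u ∩ f v).card = 0)
    (h2 : ∀ u v w, u ≠ v → ¬ G.Adj u v → G.Adj u w → G.Adj v w → (f u ∩ f v).card = 1) :
    IsGood2ToneColoring G 6 f := by
  have key : ∀ u v : V, G.dist u v = 2 → ((f u) ∩ (f v)).card = 1 := by
    intro u v h
    have he : G.edist u v = 2 := by
      have hr : G.Reachable u v := by
        by_contra hr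
        rw [SimpleGraph.dist_eq_zero_of_not_reachable hr] at h
        exact absurd h (by decide)
      rw [← hr.coe_dist_eq_edist, h]
      rfl
    obtain ⟨a, b, w, hw⟩ := SimpleGraph.edist_eq_two_iff.1 he
    rw [SimpleGraph.mem_commonNeighbors] at hw
    exact h2 u v w a b hw.1 hw.2
  refine ⟨⟨h0, ?_⟩, key⟩
  intro u v huv hr
  have hpos := hr.pos_dist_of_ne huv
  have hle : (f u ∩ f v).card ≤ 2 := (h0 u).2 ▸ Finset.card_le_card Finset.inter_subset_left
  by_cases e1 : G.dist u v = 1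
  · rw [h1 u v (SimpleGraph.dist_eq_one_iff_adj.1 e1)]; omega
  by_cases e2 : G.dist u v = 2
  · rw [key u v e2]; omega
  omega

/-- Color pairs: indices `0..3` form the repeated block, the rest the closing block of length `s`. -/
def tonePair (s j : ℕ) : Finset ℕ :=
  match j with
  | 0 => {1, 2}
  | 1 => {4, 5}
  | 2 => {1, 3}
  | 3 => {4, 6}
  | 4 => {1, 2}
  | 5 => {4, 5}
  | 6 => {1, 3}
  | 7 => if s = 4 then {4, 6} else {2, 4}
  | 8 => if s = 5 then {3, 5} else {1, 5}
  | 9 => if s = 6 then {3, 4} else {2, 3}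
  | _ => {5, 6}

def toneIdx (q i : ℕ) : ℕ := if i < 4 * q then i % 4 else 4 + (i - 4 * q)

theorem tonePair_base : ∀ s < 8, ∀ j < 11,
    tonePair s j ⊆ Finset.Icc 1 6 ∧ (tonePair s j).card = 2 := by decide

theorem tonePair_one : ∀ s < 8, 4 ≤ s → ∀ j < s + 4, ∀ j' < s + 4,
    (j' = j + 1 ∨ j = 3 ∧ j' = 0 ∨ j = s + 3 ∧ (j' = 0 ∨ j' = 4)) →
    (tonePair s j ∩ tonePair s j').card = 0 := by
  intro s h8 h4
  interval_cases s <;> decide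

set_option synthInstance.maxHeartbeats 400000 in
set_option synthInstance.maxSize 2000 in
theorem tonePair_two : ∀ s < 8, 4 ≤ s → ∀ j < s + 4, ∀ j' < s + 4,
    (j' = j + 2 ∨ j = 2 ∧ j' = 0 ∨ j = 3 ∧ j' = 1 ∨ j = s + 2 ∧ (j' = 0 ∨ j' = 4) ∨
      j = s + 3 ∧ (j' = 1 ∨ j' = 5)) →
    (tonePair s j ∩ tonePair s j').card = 1 := by
  intro s h8 h4
  interval_cases s <;> decide

theorem cyc_adj {n : ℕ} {u v : Fin n} (h : (SimpleGraph.cycleGraph n).Adj u v) :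
    (v.val = u.val + 1 ∨ u.val + 1 = n ∧ v.val = 0) ∨
    (u.val = v.val + 1 ∨ v.val + 1 = n ∧ u.val = 0) := by
  rw [SimpleGraph.cycleGraph_adj'] at h
  have hu := u.isLt
  have hv := v.isLt
  rw [Fin.sub_def, Fin.sub_def] at h
  simp only at h
  have aux : ∀ a b : ℕ, a < n → b < n → (n - b + a) % n = 1 →
      a = b + 1 ∨ b + 1 = n ∧ a = 0 := by
    intro a b ha hb hab
    by_cases hc : n - b + a < n
    · rw [Nat.mod_eq_of_lt hc] at hab; omega
    · rw [Nat.mod_eq_sub_mod (by omega), Nat.mod_eq_of_lt (by omega)] at hab; omega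
  rcases h with h | h
  · exact Or.inr (aux _ _ hu hv h)
  · exact Or.inl (aux _ _ hv hu h)

theorem tone_step1 (q s i i' : ℕ) (hs : 4 ≤ s) (hi : i < 4 * q + s) (hi' : i' < 4 * q + s)
    (hs8 : s < 8) (h : i' = i + 1 ∨ i + 1 = 4 * q + s ∧ i' = 0) :
    (tonePair s (toneIdx q i) ∩ tonePair s (toneIdx q i')).card = 0 := by
  apply tonePair_one s hs8 hs <;> unfold toneIdx <;> split_ifs <;> omega

theorem tone_step2 (q s i i' : ℕ) (hs : 4 ≤ s) (hi : i < 4 * q + s) (hi' : i' < 4 * q + s)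
    (hs8 : s < 8) (h : i' = i + 2 ∨ i + 2 = 4 * q + s + i') :
    (tonePair s (toneIdx q i) ∩ tonePair s (toneIdx q i')).card = 1 := by
  apply tonePair_two s hs8 hs <;> unfold toneIdx <;> split_ifs <;> omega

/-- For every `n ≥ 3`, the cycle `C_n` admits a good 2-tone 6-coloring. -/
theorem stmt5 (n : ℕ) (hn : 3 ≤ n) :
    ∃ f : Fin n → Finset ℕ, IsGood2ToneColoring (SimpleGraph.cycleGraph n) 6 f := by
  by_cases h3 : n = 3
  · subst h3
    refine ⟨fun i => {2 * i.val + 1, 2 * i.val + 2}, good_of_local _ _ ?_ ?_ ?_⟩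
    · decide
    · decide
    · intro u v w h1 h2
      rw [SimpleGraph.cycleGraph_three_eq_top] at h2
      exact absurd h1 h2
  obtain ⟨q, s, hs, hs8, rfl⟩ : ∃ q s, 4 ≤ s ∧ s < 8 ∧ n = 4 * q + s :=
    ⟨(n - 4) / 4, n - 4 * ((n - 4) / 4), by omega, by omega, by omega⟩
  refine ⟨fun i => tonePair s (toneIdx q i.val), good_of_local _ _ ?_ ?_ ?_⟩
  · intro v
    apply tonePair_base s hs8
    have := v.isLt
    unfold toneIdx
    split_ifs <;> omega
  · intro u v h
    rcases cyc_adj h with h | h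
    · exact tone_step1 q s _ _ hs u.isLt v.isLt hs8 h
    · rw [Finset.inter_comm]
      exact tone_step1 q s _ _ hs v.isLt u.isLt hs8 h
  · intro u v w huv _ huw hvw
    have huv' : u.val ≠ v.val := fun h => huv (Fin.ext h)
    have hu := u.isLt
    have hv := v.isLt
    have hw := w.isLt
    have h : (v.val = u.val + 2 ∨ u.val + 2 = 4 * q + s + v.val) ∨
        (u.val = v.val + 2 ∨ v.val + 2 = 4 * q + s + u.val) := by
      have a := cyc_adj huw
      have b := cyc_adj hvw
      omega
    rcases h with h | h
    · exact tone_step2 q s _ _ hs hu hv hs8 h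
    · rw [Finset.inter_comm]
      exact tone_step2 q s _ _ hs hv hu hs8 h
end

section
/- For every n ≥ 3, the cycle C_n admits a 3-good 11-coloring. -/
/-- A 3-good `k`-coloring: each vertex gets a set of three colors from `{1,…,k}`,
adjacent vertices share no colors, and vertices at distance exactly two share
exactly one color. -/
def Is3GoodColoring {V : Type*} (G : SimpleGraph V) (k : ℕ) (f : V → Finset ℕ) : Prop :=
  (∀ v, f v ⊆ Finset.Icc 1 k ∧ (f v).card = 3) ∧
  (∀ u v : V, G.Adj u v → (f u) ∩ (f v) = ∅) ∧
  (∀ u v : V, G.dist u v = 2 → ((f u) ∩ (f v)).card = 1)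

/-- A closed 3-good sequence of length `n` starting at the pair `{1,2,3}, {4,5,6}`. -/
def GoodSeq (n : ℕ) (g : ℕ → Finset ℕ) : Prop :=
  g 0 = {1, 2, 3} ∧ g 1 = {4, 5, 6} ∧ g n = {1, 2, 3} ∧ g (n + 1) = {4, 5, 6} ∧
  ∀ i < n, g i ⊆ Finset.Icc 1 11 ∧ (g i).card = 3 ∧ g i ∩ g (i + 1) = ∅ ∧
    (g i ∩ g (i + 2)).card = 1

/-- Sequence from a list. -/
def seqOf (l : List (Finset ℕ)) (i : ℕ) : Finset ℕ := l.getD i ∅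

theorem goodSeq4 : GoodSeq 4 (seqOf [{1, 2, 3}, {4, 5, 6}, {1, 7, 8}, {4, 9, 10},
    {1, 2, 3}, {4, 5, 6}]) := by
  unfold GoodSeq; decide

theorem goodSeq5 : GoodSeq 5 (seqOf [{1, 2, 3}, {4, 5, 6}, {1, 7, 8}, {2, 4, 9}, {5, 7, 10},
    {1, 2, 3}, {4, 5, 6}]) := by
  unfold GoodSeq; decide

theorem goodSeq6 : GoodSeq 6 (seqOf [{1, 2, 3}, {4, 5, 6}, {1, 7, 8}, {2, 3, 4}, {1, 5, 6},
    {4, 7, 8}, {1, 2, 3}, {4, 5, 6}]) := by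
  unfold GoodSeq; decide

theorem goodSeq7 : GoodSeq 7 (seqOf [{1, 2, 3}, {4, 5, 6}, {1, 7, 8}, {2, 3, 4}, {1, 5, 6},
    {2, 7, 8}, {5, 9, 10}, {1, 2, 3}, {4, 5, 6}]) := by
  unfold GoodSeq; decide

theorem goodSeq_step (n : ℕ) (h : ∃ g, GoodSeq n g) : ∃ g, GoodSeq (n + 4) g := by
  obtain ⟨g, h0, h1, hn, hn1, hg⟩ := h
  obtain ⟨a0, a1, a4, a5, ha⟩ := goodSeq4
  set a := seqOf [{1, 2, 3}, {4, 5, 6}, {1, 7, 8}, {4, 9, 10}, {1, 2, 3}, {4, 5, 6}] with hadef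
  clear_value a
  have key : ∀ i, i < 6 → (if i < 4 then a i else g (i - 4)) = a i := by
    intro i hi
    split_ifs with h
    · rfl
    · obtain rfl | rfl : i = 4 ∨ i = 5 := by omega
      · simp [h0, a4]
      · simp [h1, a5]
  have key2 : ∀ i, (if i + 4 < 4 then a (i + 4) else g (i + 4 - 4)) = g i := by
    intro i; simp
  refine ⟨fun i => if i < 4 then a i else g (i - 4), ?_, ?_, ?_, ?_, ?_⟩
  · simpa using a0
  · simpa using a1
  · simpa using hn
  · have := key2 (n + 1)
    simp only
    rw [show n + 4 + 1 = n + 1 + 4 by omega, this, hn1]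
  · intro i hi
    simp only
    by_cases h : i < 4
    · rw [key i (by omega), key (i + 1) (by omega), key (i + 2) (by omega)]
      exact ha i h
    · obtain ⟨j, rfl⟩ : ∃ j, i = j + 4 := ⟨i - 4, by omega⟩
      rw [show j + 4 + 1 = j + 1 + 4 by omega, show j + 4 + 2 = j + 2 + 4 by omega,
        key2, key2, key2]
      exact hg j (by omega)

theorem goodSeq_exists (n : ℕ) (hn : 4 ≤ n) : ∃ g, GoodSeq n g := by
  induction n using Nat.strong_induction_on with
  | _ n ih =>
    by_cases h : n < 8
    · interval_cases n
      · exact ⟨_, goodSeq4⟩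
      · exact ⟨_, goodSeq5⟩
      · exact ⟨_, goodSeq6⟩
      · exact ⟨_, goodSeq7⟩
    · obtain ⟨m, rfl⟩ : ∃ m, n = m + 4 := ⟨n - 4, by omega⟩
      exact goodSeq_step m (ih m (by omega) (by omega))

/-- Adjacency in the cycle in terms of values. -/
theorem adj_cases {n : ℕ} {u v : Fin n} (h : (SimpleGraph.cycleGraph n).Adj u v) :
    v.val = u.val + 1 ∨ u.val = v.val + 1 ∨ (u.val + 1 = n ∧ v.val = 0) ∨
      (v.val + 1 = n ∧ u.val = 0) := by
  rw [SimpleGraph.cycleGraph_adj'] at h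
  have hu := u.isLt
  have hv := v.isLt
  simp only [Fin.sub_def] at h
  rcases h with h | h
  · rcases lt_or_ge (n - v.val + u.val) n with h' | h'
    · rw [Nat.mod_eq_of_lt h'] at h; omega
    · rw [Nat.mod_eq_sub_mod h', Nat.mod_eq_of_lt (by omega)] at h; omega
  · rcases lt_or_ge (n - u.val + v.val) n with h' | h'
    · rw [Nat.mod_eq_of_lt h'] at h; omega
    · rw [Nat.mod_eq_sub_mod h', Nat.mod_eq_of_lt (by omega)] at h; omega

theorem dist_two {V : Type*} {G : SimpleGraph V} {u v : V} (h : G.dist u v = 2) :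
    u ≠ v ∧ ∃ w, G.Adj u w ∧ G.Adj w v := by
  refine ⟨by rintro rfl; simp at h, ?_⟩
  obtain ⟨p, hp⟩ := SimpleGraph.exists_walk_of_dist_ne_zero (G := G) (u := u) (v := v) (by omega)
  rw [h] at hp
  match p, hp with
  | .cons h1 (.cons h2 .nil), _ => exact ⟨_, h1, h2⟩

/-- For every `n ≥ 3`, the cycle `C_n` admits a 3-good 11-coloring. -/
theorem stmt7 (n : ℕ) (hn : 3 ≤ n) :
    ∃ f : Fin n → Finset ℕ, Is3GoodColoring (SimpleGraph.cycleGraph n) 11 f := by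
  obtain rfl | hn4 : n = 3 ∨ 4 ≤ n := by omega
  · refine ⟨![{1, 2, 3}, {4, 5, 6}, {7, 8, 9}], by decide, ?_, ?_⟩
    · intro u v h
      have := h.ne
      revert u v
      decide
    · intro u v h
      have hne := (dist_two h).1
      have hadj : (SimpleGraph.cycleGraph 3).Adj u v := by
        rw [SimpleGraph.cycleGraph_adj']
        clear h
        revert u v
        decide
      rw [← SimpleGraph.dist_eq_one_iff_adj] at hadj
      omega
  · obtain ⟨g, h0, h1, hgn, hgn1, hg⟩ := goodSeq_exists n hn4
    refine ⟨fun v => g v.val, fun v => ⟨(hg v v.isLt).1, (hg v v.isLt).2.1⟩, ?_, ?_⟩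
    · have key : ∀ i j : ℕ, i < n → (j = i + 1 ∨ (i + 1 = n ∧ j = 0)) → g i ∩ g j = ∅ := by
        rintro i j hi (rfl | ⟨h, rfl⟩)
        · exact (hg i hi).2.2.1
        · have := (hg i hi).2.2.1
          rwa [h, hgn, ← h0] at this
      intro u v h
      rcases adj_cases h with h | h | h | h
      · exact key _ _ u.isLt (Or.inl h)
      · rw [Finset.inter_comm]; exact key _ _ v.isLt (Or.inl h)
      · exact key _ _ u.isLt (Or.inr h)
      · rw [Finset.inter_comm]; exact key _ _ v.isLt (Or.inr h)
    · have key : ∀ i j : ℕ, i < n → (j = i + 2 ∨ (i + 2 = n ∧ j = 0) ∨ (i + 1 = n ∧ j = 1)) →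
          (g i ∩ g j).card = 1 := by
        rintro i j hi (rfl | ⟨h, rfl⟩ | ⟨h, rfl⟩)
        · exact (hg i hi).2.2.2
        · have := (hg i hi).2.2.2
          rwa [h, hgn, ← h0] at this
        · have := (hg i hi).2.2.2
          rwa [show i + 2 = n + 1 by omega, hgn1, ← h1] at this
      intro u v h
      obtain ⟨hne, w, huw, hwv⟩ := dist_two h
      have hne' : u.val ≠ v.val := fun h => hne (Fin.ext h)
      have c1 := adj_cases huw
      have c2 := adj_cases hwv
      have hu := u.isLt
      have hv := v.isLt
      have hw := w.isLt
      have : (v.val = u.val + 2 ∨ (u.val + 2 = n ∧ v.val = 0) ∨ (u.val + 1 = n ∧ v.val = 1)) ∨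
          (u.val = v.val + 2 ∨ (v.val + 2 = n ∧ u.val = 0) ∨ (v.val + 1 = n ∧ u.val = 1)) := by
        omega
      rcases this with h | h
      · exact key _ _ hu h
      · rw [Finset.inter_comm]; exact key _ _ hv h
end
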